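/- Let k be a field, S = k⟨x₁,…,x_m⟩ the free associative k-algebra, I ⊆ S the two-sided ideal generated by f¹,…,f^r, and A = S/I. Let p₁, p₂ ∈ k^m be points at which every element of I evaluates to zero, so that the 1-dimensional A-modules k(p₁) and k(p₂) are defined. For each j write f^j = ∑_{i=1}^m g_{j,i}·(x_i − (p₁)_i) (the unique left decomposition of f^j at p₁), and let J ∈ M_{r×m}(k) be the matrix with entries J_{j,i} = ε_{p₂}(g_{j,i}). Then: if p₁ ≠ p₂, dim_k Ext¹_A(k(p₁), k(p₂)) = m − 1 − rank(J); and if p₁ = p₂, dim_k Ext¹_A(k(p₁), k(p₁)) = m − rank(J). -/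

import Mathlib

open CategoryTheory Opposite

noncomputable section

/-- Evaluation of a noncommutative polynomial in `m` variables at a point of `kᵐ`. -/
def evalAt (k : Type) [Field k] (m : ℕ) (p : Fin m → k) : FreeAlgebra k (Fin m) →ₐ[k] k :=
  FreeAlgebra.lift k p

/-- The quotient algebra `k⟨x₁,…,x_m⟩/(f¹,…,fʳ)` of the free algebra by the two-sided
ideal generated by the family `f`. -/
abbrev quotAlgF (k : Type) [Field k] (m r : ℕ) (f : Fin r → FreeAlgebra k (Fin m)) : Type :=
  RingQuot (fun a b : FreeAlgebra k (Fin m) => (∃ j, a = f j) ∧ b = 0)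

/-- The one-dimensional representation of `A = k⟨x₁,…,x_m⟩/(f¹,…,fʳ)` given by a point `p`
at which the defining ideal vanishes. -/
def pointHomF (k : Type) [Field k] (m r : ℕ) (f : Fin r → FreeAlgebra k (Fin m))
    (p : Fin m → k) (h : ∀ j, evalAt k m p (f j) = 0) : quotAlgF k m r f →ₐ[k] k :=
  RingQuot.liftAlgHom k ⟨evalAt k m p, by
    rintro a b ⟨⟨j, rfl⟩, rfl⟩
    simpa using h j⟩

/-- The one-dimensional module `k(p)` over `k⟨x₁,…,x_m⟩/(f¹,…,fʳ)`. -/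
def pointModF (k : Type) [Field k] (m r : ℕ) (f : Fin r → FreeAlgebra k (Fin m))
    (p : Fin m → k) (h : ∀ j, evalAt k m p (f j) = 0) : ModuleCat (quotAlgF k m r f) :=
  letI : Module (quotAlgF k m r f) k := Module.compHom k (pointHomF k m r f p h).toRingHom
  ModuleCat.of (quotAlgF k m r f) k

/-- `Ext¹` of modules over the `k`-algebra `A` (as a `k`-vector space). -/
def Ext1 (k : Type) [Field k] (A : Type) [Ring A] [Algebra k A] (M N : ModuleCat A) :
    ModuleCat k :=
  ((Ext k (ModuleCat A) 1).obj (op M)).obj N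

theorem aux_finrank_homology {k : Type} [Field k] (S : ShortComplex (ModuleCat.{0} k))
    {V : Type} [AddCommGroup V] [Module k V] (T : S.X₂ →ₗ[k] V)
    (h : ∀ x : S.X₂, S.g.hom x = 0 → (T x = 0 ↔ ∃ z, S.f.hom z = x)) :
    Module.finrank k S.homology = Module.finrank k ((LinearMap.ker S.g.hom).map T) := by
  have e1 := S.moduleCatHomologyIso.toLinearEquiv
  rw [e1.finrank_eq]
  change Module.finrank k (LinearMap.ker S.g.hom ⧸ LinearMap.range S.moduleCatToCycles) = _
  have hk : LinearMap.range S.moduleCatToCycles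
      = LinearMap.ker (T.comp (LinearMap.ker S.g.hom).subtype) := by
    ext ⟨x, hx⟩
    simp only [LinearMap.mem_range, LinearMap.mem_ker, LinearMap.comp_apply,
      Submodule.subtype_apply]
    rw [h x hx]
    constructor
    · rintro ⟨z, hz⟩
      exact ⟨z, congrArg Subtype.val hz⟩
    · rintro ⟨z, hz⟩
      exact ⟨z, Subtype.ext hz⟩
  rw [hk, (LinearMap.quotKerEquivRange _).finrank_eq, LinearMap.range_comp,
    Submodule.range_subtype]

theorem aux_core3 {k A : Type} [Field k] [Ring A] [Algebra k A] {m : ℕ}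
    (ε₁ ε₂ : A →ₐ[k] k) (y : Fin m → A)
    (hdec : ∀ a : A, a - algebraMap k A (ε₁ a) ∈ Submodule.span A (Set.range y))
    {X N P0 P1 P2 : Type} [AddCommGroup X] [AddCommGroup N] [AddCommGroup P0] [AddCommGroup P1]
    [AddCommGroup P2] [Module A X] [Module A N] [Module A P0] [Module A P1] [Module A P2]
    (e₁ : X ≃+ k) (he₁ : ∀ (a : A) x, e₁ (a • x) = ε₁ a * e₁ x)
    (e₂ : N ≃+ k) (he₂ : ∀ (a : A) x, e₂ (a • x) = ε₂ a * e₂ x)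
    (d2 : P2 →ₗ[A] P1) (d1 : P1 →ₗ[A] P0) (π : P0 →ₗ[A] X)
    (ex1 : ∀ w, d1 w = 0 → ∃ z, d2 z = w)
    (dπ : ∀ w, π (d1 w) = 0)
    (s : P0 →ₗ[A] A × P1) (e : P0) (he : e₁ (π e) = 1)
    (hs : ∀ p, (s p).1 • e + d1 (s p).2 = p)
    (u : Fin m → P1) (hu : ∀ i, d1 (u i) = y i • e)
    (φ : P1 →ₗ[A] N) (hφ : ∀ z, φ (d2 z) = 0) (c : k)
    (hc : ∀ i, e₂ (φ (u i)) = c * ε₂ (y i)) :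
    ∃ ψ : P0 →ₗ[A] N, ∀ w, ψ (d1 w) = φ w := by
  -- kernel computation
  have key : ∀ (a : A) (w : P1), a • e + d1 w = 0 → ε₂ a * c + e₂ (φ w) = 0 := by
    intro a w h
    have h1 : ε₁ a = 0 := by
      have := congrArg (fun p => e₁ (π p)) h
      simpa [dπ, he₁, he] using this
    have h2 := hdec a
    rw [h1, map_zero, sub_zero, Submodule.mem_span_range_iff_exists_fun] at h2
    obtain ⟨b, hb⟩ := h2
    have h3 : d1 (w + ∑ i, b i • u i) = 0 := by
      rw [map_add, map_sum]
      simp only [map_smul, hu, smul_smul]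
      rw [← Finset.sum_smul, add_comm, ← h, ← hb]
      simp
    obtain ⟨z, hz⟩ := ex1 _ h3
    have h4 := hφ z
    rw [hz, map_add, map_sum] at h4
    have h5 := congrArg e₂ h4
    rw [map_add, map_sum, map_zero] at h5
    simp only [map_smul, he₂, hc] at h5
    rw [← h5, ← hb, map_sum, Finset.sum_mul, add_comm]
    congr 1
    refine Finset.sum_congr rfl fun i _ => ?_
    simp only [smul_eq_mul, map_mul]
    ring
  let F : P0 →ₗ[A] N :=
    { toFun := fun p => (s p).1 • e₂.symm c + φ (s p).2
      map_add' := fun p q => by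
        simp only [map_add, Prod.fst_add, Prod.snd_add, add_smul]; abel
      map_smul' := fun a p => by
        simp [smul_add, smul_smul] }
  refine ⟨F, fun w => ?_⟩
  apply e₂.injective
  have := key (s (d1 w)).1 ((s (d1 w)).2 - w) (by
    rw [map_sub, ← add_sub_assoc, hs, sub_self])
  change e₂ ((s (d1 w)).1 • e₂.symm c + φ (s (d1 w)).2) = _
  rw [map_add, he₂, AddEquiv.apply_symm_apply]
  rw [map_sub, map_sub] at this
  linear_combination this

theorem aux_core4 {k A : Type} [Field k] [Ring A] [Algebra k A] {m : ℕ}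
    (ε₁ ε₂ : A →ₐ[k] k) (y : Fin m → A)
    {X N P0 P1 P2 : Type} [AddCommGroup X] [AddCommGroup N] [AddCommGroup P0] [AddCommGroup P1]
    [AddCommGroup P2] [Module A X] [Module A N] [Module A P0] [Module A P1] [Module A P2]
    (e₁ : X ≃+ k) (he₁ : ∀ (a : A) x, e₁ (a • x) = ε₁ a * e₁ x)
    (e₂ : N ≃+ k) (he₂ : ∀ (a : A) x, e₂ (a • x) = ε₂ a * e₂ x)
    (d2 : P2 →ₗ[A] P1) (d1 : P1 →ₗ[A] P0) (π : P0 →ₗ[A] X)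
    (dd : ∀ z, d1 (d2 z) = 0)
    (dπ : ∀ w, π (d1 w) = 0)
    (s : P0 →ₗ[A] A × P1) (e : P0) (he : e₁ (π e) = 1)
    (hs : ∀ p, (s p).1 • e + d1 (s p).2 = p)
    (u : Fin m → P1) (hu : ∀ i, d1 (u i) = y i • e)
    (c : Fin m → k) (D : A →+ k) (hD : ∀ a b, D (a * b) = ε₂ a * D b + D a * ε₁ b)
    (hDy : ∀ i, D (y i) = c i) :
    ∃ φ : P1 →ₗ[A] N, (∀ z, φ (d2 z) = 0) ∧ ∃ t : k, ∀ i, e₂ (φ (u i)) = c i + t * ε₂ (y i) := by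
  have hs1 : ∀ p, ε₁ (s p).1 = e₁ (π p) := by
    intro p
    conv_rhs => rw [← hs p]
    simp [dπ, he₁, he]
  let φ : P1 →ₗ[A] N :=
    { toFun := fun w => e₂.symm (D (s (d1 w)).1)
      map_add' := fun p q => by simp
      map_smul' := fun a p => by
        apply e₂.injective
        rw [RingHom.id_apply, he₂]
        simp [hD, hs1, dπ] }
  refine ⟨φ, fun z => ?_, D (s e).1, fun i => ?_⟩
  · change e₂.symm (D (s (d1 (d2 z))).1) = 0
    simp [dd]
  · change e₂ (e₂.symm (D (s (d1 (u i))).1)) = _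
    simp only [AddEquiv.apply_symm_apply, hu, map_smul, Prod.smul_fst, smul_eq_mul, hD, hs1, he,
      hDy]
    ring

theorem aux_rho {k : Type} [Field k] {m : ℕ} (p₁ p₂ c : Fin m → k) :
    ∃ ρ : FreeAlgebra k (Fin m) →ₐ[k] Matrix (Fin 2) (Fin 2) k,
      (∀ i, ρ (FreeAlgebra.ι k i) = !![p₂ i, c i; 0, p₁ i]) ∧
      ∀ a, ρ a 0 0 = evalAt k m p₂ a ∧ ρ a 1 1 = evalAt k m p₁ a ∧ ρ a 1 0 = 0 := by
  refine ⟨FreeAlgebra.lift k fun i => !![p₂ i, c i; 0, p₁ i], fun i => by simp, fun a => ?_⟩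
  induction a using FreeAlgebra.induction with
  | grade0 r => simp [Matrix.algebraMap_matrix_apply]
  | grade1 i => simp [evalAt]
  | mul a b ha hb =>
    obtain ⟨a1, a2, a3⟩ := ha
    obtain ⟨b1, b2, b3⟩ := hb
    simp [Matrix.mul_apply, Fin.sum_univ_two, a1, a2, a3, b1, b2, b3]
  | add a b ha hb =>
    obtain ⟨a1, a2, a3⟩ := ha
    obtain ⟨b1, b2, b3⟩ := hb
    simp [a1, a2, a3, b1, b2, b3]

/-- The quotient map. -/
def auxMk (k : Type) [Field k] (m r : ℕ) (f : Fin r → FreeAlgebra k (Fin m)) :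
    FreeAlgebra k (Fin m) →ₐ[k] quotAlgF k m r f := RingQuot.mkAlgHom k _

theorem auxMk_surj (k : Type) [Field k] (m r : ℕ) (f : Fin r → FreeAlgebra k (Fin m)) :
    Function.Surjective (auxMk k m r f) := RingQuot.mkAlgHom_surjective k _

theorem auxMk_f (k : Type) [Field k] (m r : ℕ) (f : Fin r → FreeAlgebra k (Fin m)) (j : Fin r) :
    auxMk k m r f (f j) = 0 := by
  rw [← map_zero (auxMk k m r f)]
  exact RingQuot.mkAlgHom_rel k ⟨⟨j, rfl⟩, rfl⟩

theorem pointHomF_mk (k : Type) [Field k] (m r : ℕ) (f : Fin r → FreeAlgebra k (Fin m))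
    (p : Fin m → k) (h : ∀ j, evalAt k m p (f j) = 0) (a) :
    pointHomF k m r f p h (auxMk k m r f a) = evalAt k m p a :=
  RingQuot.liftAlgHom_mkAlgHom_apply _ _ _ _

/-- The elements `x_i - p_i`. -/
def auxY (k : Type) [Field k] (m r : ℕ) (f : Fin r → FreeAlgebra k (Fin m)) (p : Fin m → k)
    (i : Fin m) : quotAlgF k m r f :=
  auxMk k m r f (FreeAlgebra.ι k i - algebraMap k (FreeAlgebra k (Fin m)) (p i))

theorem aux_D (k : Type) [Field k] (m r : ℕ)
    (f : Fin r → FreeAlgebra k (Fin m)) (p₁ p₂ : Fin m → k)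
    (h₁ : ∀ j, evalAt k m p₁ (f j) = 0) (h₂ : ∀ j, evalAt k m p₂ (f j) = 0)
    (g : Fin r → Fin m → FreeAlgebra k (Fin m))
    (hg : ∀ j, f j = ∑ i : Fin m,
      g j i * (FreeAlgebra.ι k i - algebraMap k (FreeAlgebra k (Fin m)) (p₁ i)))
    (J : Matrix (Fin r) (Fin m) k) (hJ : ∀ j i, J j i = evalAt k m p₂ (g j i))
    (c : Fin m → k) (hc : J.mulVec c = 0) :
    ∃ D : quotAlgF k m r f →+ k,
      (∀ a b, D (a * b) = pointHomF k m r f p₂ h₂ a * D b + D a * pointHomF k m r f p₁ h₁ b) ∧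
      ∀ i, D (auxY k m r f p₁ i) = c i := by
  obtain ⟨ρ, hρ, hρ'⟩ := aux_rho p₁ p₂ c
  have hx : ∀ i, ρ (FreeAlgebra.ι k i - algebraMap k (FreeAlgebra k (Fin m)) (p₁ i))
      = !![p₂ i - p₁ i, c i; 0, 0] := by
    intro i
    rw [map_sub, hρ, AlgHom.commutes]
    ext a b
    fin_cases a <;> fin_cases b <;> simp [Matrix.algebraMap_matrix_apply]
  have hf : ∀ j, ρ (f j) = 0 := by
    intro j
    ext a b
    have h01 : ρ (f j) 0 1 = 0 := by
      have := congrFun hc j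
      rw [hg j, map_sum, Matrix.sum_apply]
      simp only [map_mul, hx, Matrix.mul_apply, Fin.sum_univ_two, (hρ' _).1, ← hJ]
      simpa [Matrix.mulVec, dotProduct] using this
    fin_cases a <;> fin_cases b
    · simpa [(hρ' _).1] using h₂ j
    · simpa using h01
    · simpa using (hρ' (f j)).2.2
    · simpa [(hρ' _).2.1] using h₁ j
  let σ : quotAlgF k m r f →ₐ[k] Matrix (Fin 2) (Fin 2) k :=
    RingQuot.liftAlgHom k ⟨ρ, by
      rintro a b ⟨⟨j, rfl⟩, rfl⟩
      simpa using hf j⟩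
  have hσ : ∀ a, σ (auxMk k m r f a) = ρ a := fun a => RingQuot.liftAlgHom_mkAlgHom_apply _ _ _ _
  refine ⟨{ toFun := fun a => σ a 0 1, map_zero' := by simp, map_add' := fun a b => by simp },
    ?_, ?_⟩
  · intro a b
    obtain ⟨a, rfl⟩ := auxMk_surj k m r f a
    obtain ⟨b, rfl⟩ := auxMk_surj k m r f b
    simp only [AddMonoidHom.coe_mk, ZeroHom.coe_mk, pointHomF_mk, map_mul, hσ, Matrix.mul_apply,
      Fin.sum_univ_two, (hρ' _).1, (hρ' _).2.1]
  · intro i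
    change σ (auxMk k m r f _) 0 1 = _
    rw [hσ, hx]
    simp

theorem aux_dec (k : Type) [Field k] (m r : ℕ)
    (f : Fin r → FreeAlgebra k (Fin m)) (p₁ : Fin m → k)
    (h₁ : ∀ j, evalAt k m p₁ (f j) = 0) (a : quotAlgF k m r f) :
    a - algebraMap k _ (pointHomF k m r f p₁ h₁ a)
      ∈ Submodule.span (quotAlgF k m r f) (Set.range (auxY k m r f p₁)) := by
  obtain ⟨a, rfl⟩ := auxMk_surj k m r f a
  rw [pointHomF_mk]
  induction a using FreeAlgebra.induction with
  | grade0 r => simp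
  | grade1 i =>
    refine Submodule.subset_span ⟨i, ?_⟩
    simp [auxY, evalAt]
  | mul a b ha hb =>
    have := Submodule.add_mem _ (Submodule.smul_mem _ (auxMk k m r f a) hb)
      (Submodule.smul_mem _ (algebraMap k _ (evalAt k m p₁ b)) ha)
    convert this using 1
    simp only [map_mul, smul_eq_mul, mul_sub]
    rw [Algebra.commutes (evalAt k m p₁ b) (auxMk k m r f a), ← map_mul (algebraMap k _),
      ← map_mul (algebraMap k _), mul_comm (evalAt k m p₁ b)]
    abel
  | add a b ha hb =>
    have := Submodule.add_mem _ ha hb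
    convert this using 1
    simp only [map_add]
    abel

theorem aux_finrank_map {k V : Type} [Field k] [AddCommGroup V] [Module k V]
    [FiniteDimensional k V] (B W : Submodule k V) (h : B ≤ W) :
    Module.finrank k (W.map B.mkQ) + Module.finrank k B = Module.finrank k W := by
  have := LinearMap.finrank_range_add_finrank_ker (B.mkQ.comp W.subtype)
  rw [LinearMap.range_comp, Submodule.range_subtype, LinearMap.ker_comp, Submodule.ker_mkQ,
    (Submodule.comapSubtypeEquivOfLe h).finrank_eq] at this
  exact this

theorem aux_final {k : Type} [Field k] {m r : ℕ} (J : Matrix (Fin r) (Fin m) k)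
    (v : Fin m → k) (hv : J.mulVec v = 0) :
    Module.finrank k ((LinearMap.ker J.mulVecLin).map (Submodule.span k {v}).mkQ)
      + Module.finrank k (Submodule.span k {v}) + J.rank = m := by
  rw [aux_finrank_map _ _ (by simpa [Submodule.span_le] using hv)]
  have := LinearMap.finrank_range_add_finrank_ker J.mulVecLin
  rw [Module.finrank_fin_fun] at this
  rw [Matrix.rank]
  omega

/-- The identification of `k(p)` with `k`. -/
def pointE (k : Type) [Field k] (m r : ℕ) (f : Fin r → FreeAlgebra k (Fin m))
    (p : Fin m → k) (h : ∀ j, evalAt k m p (f j) = 0) : pointModF k m r f p h ≃+ k :=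
  AddEquiv.refl k

theorem pointE_smul (k : Type) [Field k] (m r : ℕ) (f : Fin r → FreeAlgebra k (Fin m))
    (p : Fin m → k) (h : ∀ j, evalAt k m p (f j) = 0) (a : quotAlgF k m r f)
    (x : pointModF k m r f p h) :
    pointE k m r f p h (a • x) = pointHomF k m r f p h a * pointE k m r f p h x := rfl

open scoped ModuleCat in
theorem aux_ext
    (k : Type) [Field k] (m r : ℕ)
    (f : Fin r → FreeAlgebra k (Fin m)) (p₁ p₂ : Fin m → k)
    (h₁ : ∀ j, evalAt k m p₁ (f j) = 0) (h₂ : ∀ j, evalAt k m p₂ (f j) = 0)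
    (g : Fin r → Fin m → FreeAlgebra k (Fin m))
    (hg : ∀ j, f j = ∑ i : Fin m,
      g j i * (FreeAlgebra.ι k i - algebraMap k (FreeAlgebra k (Fin m)) (p₁ i)))
    (J : Matrix (Fin r) (Fin m) k) (hJ : ∀ j i, J j i = evalAt k m p₂ (g j i)) :
    Module.finrank k
        (Ext1 k (quotAlgF k m r f) (pointModF k m r f p₁ h₁) (pointModF k m r f p₂ h₂))
      = Module.finrank k
        ((LinearMap.ker J.mulVecLin).map (Submodule.span k {p₂ - p₁}).mkQ) := by
  set A := quotAlgF k m r f with hA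
  set X := pointModF k m r f p₁ h₁ with hX
  set N := pointModF k m r f p₂ h₂ with hN
  let P : ProjectiveResolution X := projectiveResolution X
  let d2 := P.complex.d 2 1
  let d1 := P.complex.d 1 0
  let π : P.complex.X 0 ⟶ X := P.π.f 0
  have dd : ∀ z, d1.hom (d2.hom z) = 0 := fun z =>
    ConcreteCategory.congr_hom (P.complex.d_comp_d 2 1 0) z
  have dπ : ∀ w, π.hom (d1.hom w) = 0 := fun z =>
    ConcreteCategory.congr_hom P.complex_d_comp_π_f_zero z
  have ex1 : ∀ w, d1.hom w = 0 → ∃ z, d2.hom z = w :=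
    (ShortComplex.moduleCat_exact_iff _).1 (P.exact_succ 0)
  have ex0 : ∀ w, π.hom w = 0 → ∃ z, d1.hom z = w :=
    (ShortComplex.moduleCat_exact_iff _).1 P.exact₀
  have hπ : Function.Surjective π.hom := by
    have : Epi π := inferInstanceAs (Epi (P.π.f 0))
    exact (ModuleCat.epi_iff_surjective π).1 this
  let e₁ := pointE k m r f p₁ h₁
  let e₂ := pointE k m r f p₂ h₂
  have he₁ := pointE_smul k m r f p₁ h₁
  have he₂ := pointE_smul k m r f p₂ h₂
  let ε₁ := pointHomF k m r f p₁ h₁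
  let ε₂ := pointHomF k m r f p₂ h₂
  let y := auxY k m r f p₁
  have hε₁y : ∀ i, ε₁ (y i) = 0 := fun i => by
    simp [ε₁, y, auxY, pointHomF_mk, evalAt]
  have hε₂y : ∀ i, ε₂ (y i) = p₂ i - p₁ i := fun i => by
    simp [ε₂, y, auxY, pointHomF_mk, evalAt]
  obtain ⟨e, he⟩ : ∃ e, e₁ (π.hom e) = 1 := by
    obtain ⟨e, he⟩ := hπ (e₁.symm 1)
    exact ⟨e, by rw [he, AddEquiv.apply_symm_apply]⟩
  have hu' : ∀ i, ∃ w, d1.hom w = y i • e := fun i => ex0 _ (by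
    apply e₁.injective
    rw [map_smul, he₁, map_zero]
    change ε₁ (y i) * _ = 0
    rw [hε₁y, zero_mul])
  choose u hu using hu'
  have hdec := aux_dec k m r f p₁ h₁
  obtain ⟨s, hs⟩ : ∃ s : P.complex.X 0 →ₗ[A] A × P.complex.X 1,
      ∀ p, (s p).1 • e + d1.hom (s p).2 = p := by
    let q : A × P.complex.X 1 →ₗ[A] P.complex.X 0 :=
      (LinearMap.toSpanSingleton A _ e).coprod d1.hom
    have hq : Function.Surjective q := by
      intro p
      obtain ⟨a, ha⟩ : ∃ a : A, ε₁ a = e₁ (π.hom p) :=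
        ⟨algebraMap k A (e₁ (π.hom p)), ε₁.commutes _⟩
      obtain ⟨w, hw⟩ := ex0 (p - a • e) (by
        apply e₁.injective
        rw [map_sub, map_smul, map_sub, he₁, map_zero]
        change _ - ε₁ a * e₁ _ = 0
        rw [ha, he, mul_one]
        exact sub_self _)
      refine ⟨(a, w), ?_⟩
      simp [q, hw]
    have : Module.Projective A (P.complex.X 0) :=
      (IsProjective.iff_projective (R := A) (P.complex.X 0)).2 (P.projective 0)
    obtain ⟨s, hs⟩ := Module.projective_lifting_property q LinearMap.id hq
    refine ⟨s, fun p => ?_⟩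
    have := LinearMap.congr_fun hs p
    simpa [q] using this
  let T : (P.complex.X 1 ⟶ N) →ₗ[k] (Fin m → k) :=
    { toFun := fun φ i => e₂ (φ.hom (u i))
      map_add' := fun φ ψ => by
        ext i
        exact map_add e₂ _ _
      map_smul' := fun c φ => by
        ext i
        change e₂ (algebraMap k A c • φ.hom (u i)) = c * e₂ (φ.hom (u i))
        rw [he₂, AlgHom.commutes]
        rfl }
  have hT : ∀ φ i, T φ i = e₂ (φ.hom (u i)) := fun _ _ => rfl
  let v := p₂ - p₁
  let B := Submodule.span k {v}
  have c1 : ∀ φ : P.complex.X 1 ⟶ N, d2 ≫ φ = 0 → J.mulVec (T φ) = 0 := by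
    intro φ hφ
    ext j
    have hd : d1.hom (∑ i, auxMk k m r f (g j i) • u i) = 0 := by
      rw [map_sum]
      simp only [map_smul, hu, smul_smul]
      rw [← Finset.sum_smul]
      have : ∑ i, auxMk k m r f (g j i) * y i = 0 := by
        rw [← auxMk_f k m r f j]
        conv_rhs => rw [hg j, map_sum]
        simp [y, auxY]
      rw [this, zero_smul]
    obtain ⟨z, hz⟩ := ex1 _ hd
    have h0 : φ.hom (d2.hom z) = 0 := ConcreteCategory.congr_hom hφ z
    rw [hz, map_sum] at h0
    have h5 := congrArg e₂ h0
    rw [map_sum, map_zero] at h5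
    rw [Pi.zero_apply, ← h5]
    change ∑ i, J j i * T φ i = _
    refine Finset.sum_congr rfl fun i _ => ?_
    rw [map_smul, he₂, pointHomF_mk, ← hJ]
    rfl
  have c2 : ∀ ψ : P.complex.X 0 ⟶ N, T (d1 ≫ ψ) = e₂ (ψ.hom e) • v := by
    intro ψ
    ext i
    change e₂ (ψ.hom (d1.hom (u i))) = e₂ (ψ.hom e) * (p₂ i - p₁ i)
    rw [hu, map_smul, he₂, ← hε₂y, mul_comm]
  have c3 : ∀ φ : P.complex.X 1 ⟶ N, d2 ≫ φ = 0 → T φ ∈ B → ∃ ψ : P.complex.X 0 ⟶ N,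
      d1 ≫ ψ = φ := by
    intro φ hφ hB
    obtain ⟨c, hc⟩ := Submodule.mem_span_singleton.1 hB
    obtain ⟨ψ, hψ⟩ := aux_core3 (X := X) (N := N) ε₁ ε₂ y hdec e₁ he₁ e₂ he₂ d2.hom d1.hom π.hom ex1 dπ s e he hs
      u hu φ.hom (fun z => ConcreteCategory.congr_hom hφ z) c (fun i => by
        rw [hε₂y, ← hT, ← hc]; rfl)
    refine ⟨ModuleCat.ofHom (X := P.complex.X 0) (Y := N) ψ, ?_⟩
    ext w
    exact hψ w
  have c4 : ∀ c, J.mulVec c = 0 → ∃ φ : P.complex.X 1 ⟶ N, d2 ≫ φ = 0 ∧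
      ∃ t : k, T φ = c + t • v := by
    intro c hc
    obtain ⟨D, hD, hDy⟩ := aux_D k m r f p₁ p₂ h₁ h₂ g hg J hJ c hc
    obtain ⟨φ, hφ, t, ht⟩ := aux_core4 (X := X) (N := N) ε₁ ε₂ y e₁ he₁ e₂ he₂ d2.hom d1.hom π.hom dd dπ s e he hs
      u hu c D hD hDy
    refine ⟨ModuleCat.ofHom (X := P.complex.X 1) (Y := N) φ, ?_, t, ?_⟩
    · ext z
      exact hφ z
    · ext i
      refine (ht i).trans ?_
      rw [hε₂y]
      rfl
  have iso := (P.isoExt (R := k) 1 N) ≪≫ HomologicalComplex.homologyIsoSc' _ 0 1 2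
    (by simp) (by simp)
  refine iso.toLinearEquiv.finrank_eq.trans ?_
  have main := aux_finrank_homology ((P.complex.linearYonedaObj k N).sc' 0 1 2)
    (V := (Fin m → k) ⧸ B) (B.mkQ.comp T) (by
      intro (φ : P.complex.X 1 ⟶ N) (hφ : d2 ≫ φ = 0)
      change B.mkQ (T φ) = 0 ↔ _
      rw [Submodule.mkQ_apply, Submodule.Quotient.mk_eq_zero]
      constructor
      · intro h
        exact c3 φ hφ h
      · rintro ⟨(ψ : P.complex.X 0 ⟶ N), (hψ : d1 ≫ ψ = φ)⟩
        rw [← hψ, c2]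
        exact Submodule.smul_mem _ _ (Submodule.mem_span_singleton_self v))
  refine main.trans
    (congrArg (fun W : Submodule k ((Fin m → k) ⧸ B) => Module.finrank k W) ?_)
  apply le_antisymm
  · rintro _ ⟨φ, hφ, rfl⟩
    exact ⟨T φ, c1 φ hφ, rfl⟩
  · rintro _ ⟨c, hc, rfl⟩
    obtain ⟨φ, hφ, t, ht⟩ := c4 c hc
    refine ⟨φ, hφ, ?_⟩
    change B.mkQ (T φ) = B.mkQ c
    rw [ht, map_add, map_smul]
    have : B.mkQ v = 0 := by
      rw [Submodule.mkQ_apply, Submodule.Quotient.mk_eq_zero]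
      exact Submodule.mem_span_singleton_self v
    rw [this, smul_zero, add_zero]

/-- the dimension of `Ext¹_A(k(p₁), k(p₂))` is computed by the rank of the
noncommutative Jacobi matrix of the presentation, evaluated at `p₂`. -/
theorem ext_dim_eq_corank_of_jacobi_matrix
    (k : Type) [Field k] (m r : ℕ)
    (f : Fin r → FreeAlgebra k (Fin m)) (p₁ p₂ : Fin m → k)
    (h₁ : ∀ j, evalAt k m p₁ (f j) = 0) (h₂ : ∀ j, evalAt k m p₂ (f j) = 0)
    (g : Fin r → Fin m → FreeAlgebra k (Fin m))
    (hg : ∀ j, f j = ∑ i : Fin m,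
      g j i * (FreeAlgebra.ι k i - algebraMap k (FreeAlgebra k (Fin m)) (p₁ i)))
    (J : Matrix (Fin r) (Fin m) k) (hJ : ∀ j i, J j i = evalAt k m p₂ (g j i)) :
    (p₁ ≠ p₂ → Module.finrank k
        (Ext1 k (quotAlgF k m r f) (pointModF k m r f p₁ h₁) (pointModF k m r f p₂ h₂))
      = m - 1 - J.rank) ∧
    (p₁ = p₂ → Module.finrank k
        (Ext1 k (quotAlgF k m r f) (pointModF k m r f p₁ h₁) (pointModF k m r f p₂ h₂))
      = m - J.rank) := by
  have hv : J.mulVec (p₂ - p₁) = 0 := by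
    ext j
    have := h₂ j
    rw [hg j, map_sum] at this
    rw [Pi.zero_apply, ← this]
    change ∑ i, J j i * (p₂ i - p₁ i) = _
    refine Finset.sum_congr rfl fun i _ => ?_
    rw [map_mul, ← hJ, map_sub, AlgHom.commutes]
    simp [evalAt]
  have hfin := aux_final J (p₂ - p₁) hv
  rw [aux_ext k m r f p₁ p₂ h₁ h₂ g hg J hJ]
  constructor
  · intro hne
    rw [finrank_span_singleton (sub_ne_zero.2 hne.symm)] at hfin
    omega
  · intro heq
    have h0 : Module.finrank k (Submodule.span k {p₂ - p₁}) = 0 := by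
      rw [heq, sub_self, Submodule.span_zero_singleton, finrank_bot]
    rw [h0] at hfin
    omega

end
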